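/- Let n be even, let A be a subgroup of (ℤ/nℤ)^× such that n/2 − a ∈ A for every a ∈ A (equivalently, A satisfies the orbit decomposition A = {jn/k+1 : j ∈ J₊} ∪ {jn/k−1 : j ∈ J₋} with k even and J₋ = k/2 − J₊ modulo k), let r ∈ ℤ/nℤ have even integer representative, and let X = Ar. Then σ_X(y) is a real number for every y ∈ ℤ/nℤ. -/

import Mathlib

open Complex

/-- `e(θ) = exp(2πiθ)`. -/
noncomputable def e2 (θ : ℝ) : ℂ := Complex.exp (2 * Real.pi * Complex.I * θ)

/-- The cyclic supercharacter attached to a subset `X` of `ℤ/nℤ`: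
`σ_X(y) = Σ_{x ∈ X} e(xy/n)`. -/
noncomputable def superchar (n : ℕ) (X : Set (ZMod n)) (y : ZMod n) : ℂ :=
  ∑ᶠ x ∈ X, e2 (((x.val * y.val : ℕ) : ℝ) / (n : ℝ))

/-- The orbit `Ar = {ar : a ∈ A}` of `r` under a unit subgroup `A`. -/
def unitOrbit (n : ℕ) (A : Subgroup (ZMod n)ˣ) (r : ZMod n) : Set (ZMod n) :=
  (fun a : (ZMod n)ˣ => (a : ZMod n) * r) '' (A : Set (ZMod n)ˣ)


theorem e2_eq_char (n : ℕ) [NeZero n] (x y : ZMod n) :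
    e2 (((x.val * y.val : ℕ) : ℝ) / (n : ℝ)) = ZMod.stdAddChar (x * y) := by
  have h : x * y = (((x.val * y.val : ℕ) : ℤ) : ZMod n) := by
    simp
  rw [h, ZMod.stdAddChar_coe, e2]
  congr 1
  push_cast
  ring

theorem neg_mem_orbit (n : ℕ) (hn : 0 < n) (he : Even n)
    (A : Subgroup (ZMod n)ˣ)
    (hA : ∀ a : (ZMod n)ˣ, a ∈ A → ∃ b : (ZMod n)ˣ, b ∈ A ∧
      (b : ZMod n) = ((n / 2 : ℕ) : ZMod n) - (a : ZMod n))
    (r : ZMod n) (hr : Even r.val) (x : ZMod n) (hx : x ∈ unitOrbit n A r) :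
    -x ∈ unitOrbit n A r := by
  haveI : NeZero n := ⟨hn.ne'⟩
  obtain ⟨a, ha, rfl⟩ := hx
  obtain ⟨b, hb, hab⟩ := hA a ha
  refine ⟨b, hb, ?_⟩
  obtain ⟨m, hm⟩ := he
  obtain ⟨k, hk⟩ := hr
  have h1 : r = ((k + k : ℕ) : ZMod n) := by rw [← hk]; simp
  have h2 : n / 2 = m := by omega
  have h3 : ((n / 2 : ℕ) : ZMod n) * r = 0 := by
    rw [h1, h2, ← Nat.cast_mul, ZMod.natCast_eq_zero_iff]
    exact ⟨k, by rw [hm]; ring⟩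
  simp only [hab, sub_mul, h3, zero_sub]

theorem stmt10 (n : ℕ) (hn : 0 < n) (he : Even n)
    (A : Subgroup (ZMod n)ˣ)
    (hA : ∀ a : (ZMod n)ˣ, a ∈ A → ∃ b : (ZMod n)ˣ, b ∈ A ∧
      (b : ZMod n) = ((n / 2 : ℕ) : ZMod n) - (a : ZMod n))
    (r : ZMod n) (hr : Even r.val) (y : ZMod n) :
    ∃ t : ℝ, superchar n (unitOrbit n A r) y = (t : ℂ) := by
  haveI : NeZero n := ⟨hn.ne'⟩
  have hneg := neg_mem_orbit n hn he A hA r hr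
  rw [← Complex.conj_eq_iff_real]
  classical
  unfold superchar
  simp only [e2_eq_char]
  rw [finsum_mem_eq_finite_toFinset_sum _ (Set.toFinite (unitOrbit n A r)), map_sum]
  refine Finset.sum_bij (fun x _ => -x) ?_ ?_ ?_ ?_
  · intro x hx
    simpa using hneg x (by simpa using hx)
  · intro x _ z _ h
    simpa using h
  · intro x hx
    exact ⟨-x, by simpa using hneg x (by simpa using hx), by simp⟩
  · intro x _
    rw [neg_mul, AddChar.map_neg_eq_conj]
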